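/- Let A and B be connected graded k-algebras. There is an isomorphism of graded k-vector spaces A ⊔ B ≅ B ⊗_k T_k(A₊ ⊗_k B₊) ⊗_k A, where A₊ = ⊕_{i≥1} A_i and B₊ = ⊕_{i≥1} B_i are the augmentation ideals and T_k denotes the tensor algebra over k, all graded by total degree. -/

import Mathlib

/-!
Connected graded `k`-algebras are modelled as `k`-algebras `A` equipped with an internal
grading `𝒜 : ℕ → Submodule k A` (a `GradedRing`) with `𝒜 0` spanned by `1`.
The free product (coproduct) of `k`-algebras is `LinearAlgebra.FreeProduct`.
-/

open DirectSum TensorProduct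

noncomputable section

variable (k : Type) [Field k]

section FreeProductGrading

variable (A B : Type) [Ring A] [Ring B] [Algebra k A] [Algebra k B]

/-- The pair of algebras `A`, `B` as a `Bool`-indexed family. -/
def boolFam : Bool → Type := fun b => Bool.rec B A b

instance (b : Bool) : Ring (boolFam A B b) := by
  cases b <;> (dsimp [boolFam]; infer_instance)

instance (b : Bool) : Algebra k (boolFam A B b) := by
  cases b <;> (dsimp [boolFam]; infer_instance)

/-- The free product `A ⊔ B` (the coproduct of `A` and `B` in the category of
`k`-algebras). -/
abbrev FreeProd : Type := LinearAlgebra.FreeProduct k (boolFam A B)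

/-- The canonical embedding `A → A ⊔ B`. -/
def inlFP : A →ₐ[k] FreeProd k A B :=
  LinearAlgebra.FreeProduct.ι k (boolFam A B) true

/-- The canonical embedding `B → A ⊔ B`. -/
def inrFP : B →ₐ[k] FreeProd k A B :=
  LinearAlgebra.FreeProduct.ι k (boolFam A B) false

variable (𝒜 : ℕ → Submodule k A) (ℬ : ℕ → Submodule k B)

/-- A letter of a word in the free product: a homogeneous element of `A` or of `B`. -/
abbrev Letter : Type := (Σ i : ℕ, ↥(𝒜 i)) ⊕ (Σ i : ℕ, ↥(ℬ i))

/-- The degree of a letter. -/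
def letterDeg : Letter k A B 𝒜 ℬ → ℕ := Sum.elim (fun p => p.1) (fun p => p.1)

/-- The image of a letter in the free product `A ⊔ B`. -/
def letterEmb : Letter k A B 𝒜 ℬ → FreeProd k A B :=
  Sum.elim (fun p => inlFP k A B ↑p.2) (fun p => inrFP k A B ↑p.2)

/-- The degree-`n` piece of the free product `A ⊔ B`, graded by total degree: the span of
all products of homogeneous elements of `A` and `B` whose degrees sum to `n`. -/
def fpGrade (n : ℕ) : Submodule k (FreeProd k A B) :=
  Submodule.span k
    {x | ∃ l : List (Letter k A B 𝒜 ℬ),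
      (l.map (letterDeg k A B 𝒜 ℬ)).sum = n ∧ x = (l.map (letterEmb k A B 𝒜 ℬ)).prod}

/-- The augmentation ideal `A₊ = ⊕_{i≥1} A_i` of a connected graded algebra, as a
`k`-submodule. -/
def augSub : Submodule k A := ⨆ i : {i : ℕ // 0 < i}, 𝒜 i

/-- The degree-`d` piece of `A₊ ⊗_k B₊`, graded by total degree. -/
def pairGrade (d : ℕ) : Submodule k (↥(augSub k A 𝒜) ⊗[k] ↥(augSub k B ℬ)) :=
  Submodule.span k
    {x | ∃ (i j : ℕ) (a : ↥(augSub k A 𝒜)) (b : ↥(augSub k B ℬ)),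
      (a : A) ∈ 𝒜 i ∧ (b : B) ∈ ℬ j ∧ i + j = d ∧ x = a ⊗ₜ[k] b}

/-- The degree-`m` piece of the tensor algebra `T_k(A₊ ⊗_k B₊)`, graded by total degree. -/
def taGrade (m : ℕ) : Submodule k (TensorAlgebra k (↥(augSub k A 𝒜) ⊗[k] ↥(augSub k B ℬ))) :=
  Submodule.span k
    {x | ∃ l : List (Σ d : ℕ, ↥(pairGrade k A B 𝒜 ℬ d)),
      (l.map fun p => p.1).sum = m ∧
      x = (l.map fun p => TensorAlgebra.ι k (↑p.2 :
        ↥(augSub k A 𝒜) ⊗[k] ↥(augSub k B ℬ))).prod}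

/-- The degree-`n` piece of `B ⊗_k T_k(A₊ ⊗_k B₊) ⊗_k A`, graded by total degree. -/
def rhsGrade (n : ℕ) :
    Submodule k (B ⊗[k] ((TensorAlgebra k (↥(augSub k A 𝒜) ⊗[k] ↥(augSub k B ℬ))) ⊗[k] A)) :=
  Submodule.span k
    {x | ∃ (i j m : ℕ) (b : B) (t : TensorAlgebra k (↥(augSub k A 𝒜) ⊗[k] ↥(augSub k B ℬ)))
        (a : A), b ∈ ℬ j ∧ t ∈ taGrade k A B 𝒜 ℬ m ∧ a ∈ 𝒜 i ∧ j + m + i = n ∧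
      x = b ⊗ₜ[k] (t ⊗ₜ[k] a)}

end FreeProductGrading

/-!
Write `P = A₊`, `Q = B₊` and `N = B ⊗ T(P ⊗ Q) ⊗ A`, and evaluate `b ⊗ t ⊗ a ∈ N` in `A ⊔ B` as
`b t a`. The splittings `B = k ⊕ Q`, `A = k ⊕ P` and `T(V) = k ⊕ V ⊗ T(V)` identify `N` with
`A ⊕ (A ⊗ Q ⊗ T(P ⊗ Q) ⊗ A)`, so that not only `B` but also `A` acts on `N` from the left. The
resulting action of `A ⊔ B` on `1 ⊗ 1 ⊗ 1` inverts evaluation, and evaluation is surjective since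
its image contains `1` and is stable under left multiplication by `A` and `B`.

Evaluation maps the degree `n` part of `N` into that of `A ⊔ B`, and the graded parts span `N`.
Equality of the images follows as soon as the graded parts of `A ⊔ B` are independent; they are,
because the algebra map `A ⊔ B → (A ⊔ B)[X]` sending a homogeneous `x` in `A` or `B` to
`x X ^ deg x` is multiplication by `X ^ n` on the degree `n` part.
-/

section ProdLeft

variable {R M₁ M₂ M₃ : Type*} [CommSemiring R] [AddCommMonoid M₁] [AddCommMonoid M₂]
  [AddCommMonoid M₃] [Module R M₁] [Module R M₂] [Module R M₃]

theorem prodLeft_symm_tmul_zero (x : M₁) (y : M₃) :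
    (TensorProduct.prodLeft R R M₁ M₂ M₃).symm (x ⊗ₜ y, 0) = (x, 0) ⊗ₜ y := by
  simp [LinearEquiv.symm_apply_eq]

theorem prodLeft_symm_zero_tmul (x : M₂) (y : M₃) :
    (TensorProduct.prodLeft R R M₁ M₂ M₃).symm (0, x ⊗ₜ y) = (0, x) ⊗ₜ y := by
  simp [LinearEquiv.symm_apply_eq]

end ProdLeft

section UnitComplement

variable {R A : Type*} [CommSemiring R] [Semiring A] [Algebra R A] {P : Submodule R A}

variable (P) in
/-- `P` is a linear complement of the unit line of `A`, that is `A = R · 1 ⊕ P` with `R · 1` free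
of rank one. -/
def IsUnitComplement : Prop :=
  Function.Bijective ((Algebra.linearMap R A).coprod P.subtype)

namespace IsUnitComplement

theorem of_isCompl {K A : Type*} [Field K] [Ring A] [Nontrivial A] [Algebra K A]
    {P : Submodule K A} (h : IsCompl (Submodule.span K {1}) P) : IsUnitComplement P := by
  rw [← Submodule.one_eq_span, Submodule.one_eq_range] at h
  refine ⟨?_, ?_⟩
  · rw [← LinearMap.ker_eq_bot,
      LinearMap.ker_coprod_of_disjoint_range _ _ (by simpa using h.disjoint), P.ker_subtype,
      LinearMap.ker_eq_bot.2 (FaithfulSMul.algebraMap_injective K A), Submodule.prod_bot]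
  · rw [← LinearMap.range_eq_top, LinearMap.range_coprod, Submodule.range_subtype, h.sup_eq_top]

/-- The decomposition `R ⊕ P ≃ A`. -/
def prodEquiv (h : IsUnitComplement P) : (R × P) ≃ₗ[R] A :=
  .ofBijective _ h

theorem prodEquiv_apply (h : IsUnitComplement P) (r : R) (p : P) :
    h.prodEquiv (r, p) = r • 1 + (p : A) :=
  congrArg (· + (p : A)) (Algebra.algebraMap_eq_smul_one r)

/-- The decomposition `U ⊕ (P ⊗ U) ≃ A ⊗ U` given by `A = R · 1 ⊕ P`. -/
def tensorEquiv (h : IsUnitComplement P) (U : Type*) [AddCommMonoid U] [Module R U] :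
    (U × P ⊗[R] U) ≃ₗ[R] A ⊗[R] U :=
  ((TensorProduct.lid R U).symm.prodCongr (.refl R _)) ≪≫ₗ
    (TensorProduct.prodLeft R R R P U).symm ≪≫ₗ
    TensorProduct.congr h.prodEquiv (.refl R U)

theorem tensorEquiv_apply (h : IsUnitComplement P) {U : Type*} [AddCommMonoid U] [Module R U]
    (u : U) (x : P ⊗[R] U) :
    h.tensorEquiv U (u, x) = 1 ⊗ₜ u + P.subtype.rTensor U x := by
  suffices (h.tensorEquiv U).toLinearMap =
      (TensorProduct.mk R A U 1).coprod (P.subtype.rTensor U) from LinearMap.congr_fun this (u, x)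
  ext <;> simp [tensorEquiv, prodLeft_symm_tmul_zero, prodLeft_symm_zero_tmul, prodEquiv_apply]

end IsUnitComplement

end UnitComplement

section TensorAlgebra

variable (R V : Type*) [CommSemiring R] [AddCommMonoid V] [Module R V]

/-- The map `R ⊕ (V ⊗ T(V)) → T(V)` which is the unit on `R` and multiplication on `V ⊗ T(V)`. -/
def consTensorAlgebra : (R × V ⊗[R] TensorAlgebra R V) →ₗ[R] TensorAlgebra R V :=
  (Algebra.linearMap R _).coprod
    (LinearMap.mul' R _ ∘ₗ (TensorAlgebra.ι R).rTensor (TensorAlgebra R V))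

/-- The action of `T(V)` on `R ⊕ (V ⊗ T(V))` for which `consTensorAlgebra` is equivariant: a vector
`v` sends `x` to `v ⊗ consTensorAlgebra x`. -/
def consAction : TensorAlgebra R V →ₐ[R] Module.End R (R × V ⊗[R] TensorAlgebra R V) :=
  TensorAlgebra.lift R
    (((TensorProduct.mk R V _).compr₂ (LinearMap.inr R R _)).compl₂ (consTensorAlgebra R V))

variable {R V}

theorem consTensorAlgebra_algebraMap (r : R) :
    consTensorAlgebra R V (r, 0) = algebraMap R _ r := by
  simp [consTensorAlgebra]

theorem consTensorAlgebra_tmul (v : V) (t : TensorAlgebra R V) :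
    consTensorAlgebra R V (0, v ⊗ₜ t) = TensorAlgebra.ι R v * t := by
  simp [consTensorAlgebra]

theorem consAction_ι (v : V) (x : R × V ⊗[R] TensorAlgebra R V) :
    consAction R V (TensorAlgebra.ι R v) x = (0, v ⊗ₜ consTensorAlgebra R V x) := by
  simp [consAction]

theorem consTensorAlgebra_consAction (t : TensorAlgebra R V) (x : R × V ⊗[R] TensorAlgebra R V) :
    consTensorAlgebra R V (consAction R V t x) = t * consTensorAlgebra R V x := by
  induction t using TensorAlgebra.induction generalizing x with
  | algebraMap r => simp [Algebra.smul_def]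
  | ι v => rw [consAction_ι, consTensorAlgebra_tmul]
  | mul s t hs ht => simp [hs, ht, mul_assoc]
  | add s t hs ht => simp [hs, ht, add_mul]

theorem consTensorAlgebra_consAction_one (t : TensorAlgebra R V) :
    consTensorAlgebra R V (consAction R V t (1, 0)) = t := by
  rw [consTensorAlgebra_consAction, consTensorAlgebra_algebraMap, map_one, mul_one]

variable (R V) in
/-- The decomposition `R ⊕ (V ⊗ T(V)) ≃ T(V)` of the tensor algebra. -/
def tensorAlgebraConsEquiv : (R × V ⊗[R] TensorAlgebra R V) ≃ₗ[R] TensorAlgebra R V :=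
  .ofLinearMap (consTensorAlgebra R V)
    (LinearMap.applyₗ (1, 0) ∘ₗ (consAction R V).toLinearMap)
    (LinearMap.ext consTensorAlgebra_consAction_one)
    (by
      refine LinearMap.prod_ext (LinearMap.ext_ring ?_) (TensorProduct.ext' fun v t => ?_)
      · simp [consTensorAlgebra_algebraMap]
      · simp [consTensorAlgebra_tmul, consAction_ι, consTensorAlgebra_consAction_one])

/-- The decomposition `M ⊕ (V ⊗ (T(V) ⊗ M)) ≃ T(V) ⊗ M`. -/
def tensorAlgebraTensorEquiv (R V M : Type*) [CommSemiring R] [AddCommMonoid V] [Module R V]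
    [AddCommMonoid M] [Module R M] :
    (M × V ⊗[R] (TensorAlgebra R V ⊗[R] M)) ≃ₗ[R] TensorAlgebra R V ⊗[R] M :=
  ((TensorProduct.lid R M).symm.prodCongr (TensorProduct.assoc R V _ M).symm) ≪≫ₗ
    (TensorProduct.prodLeft R R R (V ⊗[R] TensorAlgebra R V) M).symm ≪≫ₗ
    TensorProduct.congr (tensorAlgebraConsEquiv R V) (.refl R M)

variable {M : Type*} [AddCommMonoid M] [Module R M]

theorem tensorAlgebraTensorEquiv_inl (m : M) :
    tensorAlgebraTensorEquiv R V M (m, 0) = 1 ⊗ₜ m := by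
  simp [tensorAlgebraTensorEquiv, tensorAlgebraConsEquiv, prodLeft_symm_tmul_zero,
    consTensorAlgebra_algebraMap]

theorem tensorAlgebraTensorEquiv_tmul (v : V) (t : TensorAlgebra R V) (m : M) :
    tensorAlgebraTensorEquiv R V M (0, v ⊗ₜ (t ⊗ₜ m)) = (TensorAlgebra.ι R v * t) ⊗ₜ m := by
  simp [tensorAlgebraTensorEquiv, tensorAlgebraConsEquiv, prodLeft_symm_zero_tmul,
    consTensorAlgebra_tmul]

end TensorAlgebra

section NormalForm

variable {R A B : Type*} [CommSemiring R] [Semiring A] [Semiring B] [Algebra R A] [Algebra R B]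
  (P : Submodule R A) (Q : Submodule R B)

/-- The module `B ⊗ T(P ⊗ Q) ⊗ A` of normal forms of elements of the free product. -/
abbrev NormalForm : Type _ := B ⊗[R] (TensorAlgebra R (P ⊗[R] Q) ⊗[R] A)

/-- The normal forms `Q ⊗ T(P ⊗ Q) ⊗ A` that start with a factor from `Q`. -/
abbrev NormalFormTail : Type _ := Q ⊗[R] (TensorAlgebra R (P ⊗[R] Q) ⊗[R] A)

variable {P Q} (hP : IsUnitComplement P) (hQ : IsUnitComplement Q)

/-- The module of normal forms as the left `A`-module `A ⊕ A ⊗ Q ⊗ T(P ⊗ Q) ⊗ A`. -/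
def normalFormSplit : (A × A ⊗[R] NormalFormTail P Q) ≃ₗ[R] NormalForm P Q :=
  ((LinearEquiv.refl R A).prodCongr ((hP.tensorEquiv _).symm ≪≫ₗ .prodComm R _ _)) ≪≫ₗ
    (LinearEquiv.prodAssoc R A _ _).symm ≪≫ₗ
    (((LinearEquiv.refl R A).prodCongr (TensorProduct.assoc R P Q _).symm ≪≫ₗ
      tensorAlgebraTensorEquiv R (P ⊗[R] Q) A).prodCongr (.refl R _)) ≪≫ₗ
    hQ.tensorEquiv _

theorem normalFormSplit_tensorEquiv (a : A) (u : NormalFormTail P Q)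
    (x : P ⊗[R] NormalFormTail P Q) :
    normalFormSplit hP hQ (a, hP.tensorEquiv _ (u, x)) = hQ.tensorEquiv _
      (tensorAlgebraTensorEquiv R (P ⊗[R] Q) A (a, (TensorProduct.assoc R P Q _).symm x), u) := by
  simp [normalFormSplit, LinearEquiv.prodAssoc]

theorem normalFormSplit_inl (a : A) : normalFormSplit hP hQ (a, 0) = 1 ⊗ₜ (1 ⊗ₜ a) := by
  have h := normalFormSplit_tensorEquiv hP hQ a 0 0
  simpa [IsUnitComplement.tensorEquiv_apply, tensorAlgebraTensorEquiv_inl] using h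

theorem normalFormSplit_one_tmul (u : NormalFormTail P Q) :
    normalFormSplit hP hQ (0, 1 ⊗ₜ u) = Q.subtype.rTensor _ u := by
  have h := normalFormSplit_tensorEquiv hP hQ 0 u 0
  rw [map_zero, Prod.mk_zero_zero, map_zero] at h
  simpa [IsUnitComplement.tensorEquiv_apply] using h

theorem normalFormSplit_coe_tmul (p : P) (q : Q) (t : TensorAlgebra R (P ⊗[R] Q)) (a : A) :
    normalFormSplit hP hQ (0, (p : A) ⊗ₜ (q ⊗ₜ (t ⊗ₜ a))) =
      1 ⊗ₜ ((TensorAlgebra.ι R (p ⊗ₜ q) * t) ⊗ₜ a) := by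
  have h := normalFormSplit_tensorEquiv hP hQ 0 0 (p ⊗ₜ (q ⊗ₜ (t ⊗ₜ a)))
  simpa [IsUnitComplement.tensorEquiv_apply, tensorAlgebraTensorEquiv_tmul] using h

/-- The left action of `A` on normal forms, transported along `normalFormSplit`. -/
def inlAction : A →ₐ[R] Module.End R (NormalForm P Q) :=
  ((normalFormSplit hP hQ).conjAlgEquiv R).toAlgHom.comp
    (Algebra.lsmul R R (A × A ⊗[R] NormalFormTail P Q))

theorem inlAction_normalFormSplit (a : A) (x : A × A ⊗[R] NormalFormTail P Q) :
    inlAction hP hQ a (normalFormSplit hP hQ x) = normalFormSplit hP hQ (a • x) := by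
  simp [inlAction]

theorem inlAction_one_tmul (a a' : A) :
    inlAction hP hQ a (1 ⊗ₜ (1 ⊗ₜ a')) = 1 ⊗ₜ (1 ⊗ₜ (a * a')) := by
  rw [← normalFormSplit_inl hP hQ, inlAction_normalFormSplit, ← normalFormSplit_inl hP hQ,
    Prod.smul_mk, smul_zero, smul_eq_mul]

theorem inlAction_coe_tmul (p : P) (q : Q) (t : TensorAlgebra R (P ⊗[R] Q)) (a : A) :
    inlAction hP hQ p ((q : B) ⊗ₜ (t ⊗ₜ a)) = 1 ⊗ₜ ((TensorAlgebra.ι R (p ⊗ₜ q) * t) ⊗ₜ a) := by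
  have h := inlAction_normalFormSplit hP hQ p (0, 1 ⊗ₜ (q ⊗ₜ (t ⊗ₜ a)))
  rwa [normalFormSplit_one_tmul, LinearMap.rTensor_tmul, Prod.smul_mk, smul_zero,
    TensorProduct.smul_tmul', smul_eq_mul, mul_one, normalFormSplit_coe_tmul] at h

variable (P Q) in
/-- The left action of `B` on the first factor of normal forms. -/
def inrAction : B →ₐ[R] Module.End R (NormalForm P Q) :=
  Algebra.lsmul R R (NormalForm P Q)

theorem inrAction_tmul (b b' : B) (x : TensorAlgebra R (P ⊗[R] Q) ⊗[R] A) :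
    inrAction P Q b (b' ⊗ₜ x) = (b * b') ⊗ₜ x := by
  simp [inrAction, TensorProduct.smul_tmul']

end NormalForm

section Evaluation

variable {R A B F : Type*} [CommSemiring R] [Semiring A] [Semiring B] [Semiring F] [Algebra R A]
  [Algebra R B] [Algebra R F] (P : Submodule R A) (Q : Submodule R B)
  (f : A →ₐ[R] F) (g : B →ₐ[R] F)

/-- The algebra map `T(P ⊗ Q) → F` induced by `p ⊗ q ↦ f p * g q`. -/
def pairLift : TensorAlgebra R (P ⊗[R] Q) →ₐ[R] F :=
  TensorAlgebra.lift R (LinearMap.mul' R F ∘ₗ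
    TensorProduct.map (f.toLinearMap ∘ₗ P.subtype) (g.toLinearMap ∘ₗ Q.subtype))

/-- The evaluation `b ⊗ t ⊗ a ↦ b * t * a` of normal forms in an algebra receiving maps from `A`
and `B`. -/
def evalNormalForm : NormalForm P Q →ₗ[R] F :=
  LinearMap.mul' R F ∘ₗ TensorProduct.map g.toLinearMap
    (LinearMap.mul' R F ∘ₗ TensorProduct.map (pairLift P Q f g).toLinearMap f.toLinearMap)

variable {P Q}

theorem pairLift_ι_tmul (p : P) (q : Q) :
    pairLift P Q f g (TensorAlgebra.ι R (p ⊗ₜ q)) = f p * g q := by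
  simp [pairLift]

theorem evalNormalForm_tmul (b : B) (t : TensorAlgebra R (P ⊗[R] Q)) (a : A) :
    evalNormalForm P Q f g (b ⊗ₜ (t ⊗ₜ a)) = g b * (pairLift P Q f g t * f a) := by
  simp [evalNormalForm]

theorem evalNormalForm_inrAction (b : B) (x : NormalForm P Q) :
    evalNormalForm P Q f g (inrAction P Q b x) = g b * evalNormalForm P Q f g x := by
  suffices evalNormalForm P Q f g ∘ₗ inrAction P Q b =
      LinearMap.mulLeft R (g b) ∘ₗ evalNormalForm P Q f g from LinearMap.congr_fun this x
  ext b' t a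
  simp [inrAction_tmul, evalNormalForm_tmul, mul_assoc]

variable (hP : IsUnitComplement P) (hQ : IsUnitComplement Q)

theorem evalNormalForm_normalFormSplit_coe_tmul (p : P) (u : NormalFormTail P Q) :
    evalNormalForm P Q f g (normalFormSplit hP hQ (0, (p : A) ⊗ₜ u)) =
      f p * evalNormalForm P Q f g (Q.subtype.rTensor _ u) := by
  suffices evalNormalForm P Q f g ∘ₗ (normalFormSplit hP hQ).toLinearMap ∘ₗ LinearMap.inr R A _ ∘ₗ
        TensorProduct.mk R A _ (p : A) =
      LinearMap.mulLeft R (f p) ∘ₗ evalNormalForm P Q f g ∘ₗ Q.subtype.rTensor _ from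
    LinearMap.congr_fun this u
  ext q t a
  simp [normalFormSplit_coe_tmul, evalNormalForm_tmul, pairLift_ι_tmul, mul_assoc]

theorem evalNormalForm_normalFormSplit_tmul (a : A) (u : NormalFormTail P Q) :
    evalNormalForm P Q f g (normalFormSplit hP hQ (0, a ⊗ₜ u)) =
      f a * evalNormalForm P Q f g (Q.subtype.rTensor _ u) := by
  obtain ⟨⟨r, p⟩, rfl⟩ := hP.prodEquiv.surjective a
  have hsplit : ((0, (r • 1 + p : A) ⊗ₜ u) : A × A ⊗[R] NormalFormTail P Q) =
      r • (0, 1 ⊗ₜ u) + (0, (p : A) ⊗ₜ u) := by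
    simp [TensorProduct.add_tmul, TensorProduct.smul_tmul']
  rw [hP.prodEquiv_apply, hsplit, map_add, map_add, map_smul, map_smul, normalFormSplit_one_tmul,
    evalNormalForm_normalFormSplit_coe_tmul, map_add, map_smul, map_one, add_mul, smul_one_mul]

theorem evalNormalForm_inlAction (a : A) (x : NormalForm P Q) :
    evalNormalForm P Q f g (inlAction hP hQ a x) = f a * evalNormalForm P Q f g x := by
  obtain ⟨y, rfl⟩ := (normalFormSplit hP hQ).surjective x
  rw [inlAction_normalFormSplit]
  suffices evalNormalForm P Q f g ∘ₗ (normalFormSplit hP hQ).toLinearMap ∘ₗ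
        Algebra.lsmul R R (A × A ⊗[R] NormalFormTail P Q) a =
      LinearMap.mulLeft R (f a) ∘ₗ evalNormalForm P Q f g ∘ₗ (normalFormSplit hP hQ).toLinearMap
    from LinearMap.congr_fun this y
  refine LinearMap.prod_ext (LinearMap.ext fun a' => ?_) (TensorProduct.ext' fun a' u => ?_)
  · simp [normalFormSplit_inl, evalNormalForm_tmul]
  · simp [TensorProduct.smul_tmul', evalNormalForm_normalFormSplit_tmul, mul_assoc]

variable {f g hP hQ} {Ψ : F →ₐ[R] Module.End R (NormalForm P Q)}

theorem action_pairLift (hf : Ψ.comp f = inlAction hP hQ) (hg : Ψ.comp g = inrAction P Q)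
    (t s : TensorAlgebra R (P ⊗[R] Q)) (a : A) :
    Ψ (pairLift P Q f g t) (1 ⊗ₜ (s ⊗ₜ a)) = 1 ⊗ₜ ((t * s) ⊗ₜ a) := by
  induction t using TensorAlgebra.induction generalizing s with
  | algebraMap r =>
    simp [← Algebra.smul_def, ← TensorProduct.smul_tmul']
  | ι v =>
    induction v using TensorProduct.induction_on with
    | zero => simp
    | tmul p q =>
      rw [pairLift_ι_tmul, map_mul, ← AlgHom.comp_apply, ← AlgHom.comp_apply, hf, hg,
        Module.End.mul_apply, inrAction_tmul, mul_one, inlAction_coe_tmul]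
    | add x y hx hy => simp [hx, hy, add_mul, TensorProduct.add_tmul, TensorProduct.tmul_add]
  | mul x y hx hy => simp [hx, hy, mul_assoc]
  | add x y hx hy => simp [hx, hy, add_mul, TensorProduct.add_tmul, TensorProduct.tmul_add]

theorem action_evalNormalForm (hf : Ψ.comp f = inlAction hP hQ) (hg : Ψ.comp g = inrAction P Q)
    (x : NormalForm P Q) : Ψ (evalNormalForm P Q f g x) (1 ⊗ₜ (1 ⊗ₜ 1)) = x := by
  suffices LinearMap.applyₗ (1 ⊗ₜ (1 ⊗ₜ 1)) ∘ₗ Ψ.toLinearMap ∘ₗ evalNormalForm P Q f g =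
      LinearMap.id from LinearMap.congr_fun this x
  have hf' (a : A) : Ψ (f a) = inlAction hP hQ a := AlgHom.congr_fun hf a
  have hg' (b : B) : Ψ (g b) = inrAction P Q b := AlgHom.congr_fun hg b
  ext b t a
  simp [evalNormalForm_tmul, hf', hg', inlAction_one_tmul, inrAction_tmul, action_pairLift hf hg]

theorem evalNormalForm_injective (hf : Ψ.comp f = inlAction hP hQ)
    (hg : Ψ.comp g = inrAction P Q) : Function.Injective (evalNormalForm P Q f g) :=
  Function.LeftInverse.injective (g := fun y => Ψ y (1 ⊗ₜ (1 ⊗ₜ 1))) (action_evalNormalForm hf hg)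

theorem mul_evalNormalForm_mem_range (hP : IsUnitComplement P) (hQ : IsUnitComplement Q)
    (hgen : f.range ⊔ g.range = ⊤) (y : F) (x : NormalForm P Q) :
    y * evalNormalForm P Q f g x ∈ LinearMap.range (evalNormalForm P Q f g) := by
  have hy : y ∈ Algebra.adjoin R (f.range ∪ g.range : Set F) := by
    rw [← Algebra.sup_def, hgen]
    exact Algebra.mem_top
  induction hy using Algebra.adjoin_induction generalizing x with
  | mem y hy =>
    rcases hy with ⟨a, rfl⟩ | ⟨b, rfl⟩
    · exact ⟨inlAction hP hQ a x, evalNormalForm_inlAction f g hP hQ a x⟩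
    · exact ⟨inrAction P Q b x, evalNormalForm_inrAction f g b x⟩
  | algebraMap r => exact ⟨r • x, by rw [map_smul, Algebra.smul_def]⟩
  | add y z _ _ hy hz => exact add_mul y z _ ▸ add_mem (hy x) (hz x)
  | mul y z _ _ hy hz =>
    obtain ⟨x', hx'⟩ := hz x
    rw [mul_assoc, ← hx']
    exact hy x'

theorem evalNormalForm_surjective (hP : IsUnitComplement P) (hQ : IsUnitComplement Q)
    (hgen : f.range ⊔ g.range = ⊤) :
    Function.Surjective (evalNormalForm P Q f g) := fun y => by
  simpa [evalNormalForm_tmul] using mul_evalNormalForm_mem_range hP hQ hgen y (1 ⊗ₜ (1 ⊗ₜ 1))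

end Evaluation

section FreeProd

variable {k} {A B E : Type} [Ring A] [Ring B] [Semiring E] [Algebra k A] [Algebra k B]
  [Algebra k E]

/-- The algebra map out of the free product induced by algebra maps out of `A` and `B`. -/
def freeProdLift (f : A →ₐ[k] E) (g : B →ₐ[k] E) : FreeProd k A B →ₐ[k] E :=
  LinearAlgebra.FreeProduct.lift k (boolFam A B) fun {b} =>
    match b with
    | true => f
    | false => g

theorem freeProdLift_comp_inlFP (f : A →ₐ[k] E) (g : B →ₐ[k] E) :
    (freeProdLift f g).comp (inlFP k A B) = f :=
  LinearAlgebra.FreeProduct.lift_comp_ι k (boolFam A B) (i := true) _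

theorem freeProdLift_comp_inrFP (f : A →ₐ[k] E) (g : B →ₐ[k] E) :
    (freeProdLift f g).comp (inrFP k A B) = g :=
  LinearAlgebra.FreeProduct.lift_comp_ι k (boolFam A B) (i := false) _

theorem freeProd_algHom_ext {φ ψ : FreeProd k A B →ₐ[k] E}
    (hl : φ.comp (inlFP k A B) = ψ.comp (inlFP k A B))
    (hr : φ.comp (inrFP k A B) = ψ.comp (inrFP k A B)) : φ = ψ := by
  refine (LinearAlgebra.FreeProduct.lift k (boolFam A B)).symm.injective ?_
  funext b
  cases b
  · exact hr
  · exact hl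

variable (k A B) in
theorem range_inlFP_sup_range_inrFP : (inlFP k A B).range ⊔ (inrFP k A B).range = ⊤ := by
  set S := (inlFP k A B).range ⊔ (inrFP k A B).range
  let φ : FreeProd k A B →ₐ[k] S :=
    freeProdLift ((Subalgebra.inclusion le_sup_left).comp (inlFP k A B).rangeRestrict)
      ((Subalgebra.inclusion le_sup_right).comp (inrFP k A B).rangeRestrict)
  have hφ : S.val.comp φ = AlgHom.id k _ := freeProd_algHom_ext
    (by rw [AlgHom.comp_assoc, freeProdLift_comp_inlFP]; rfl)
    (by rw [AlgHom.comp_assoc, freeProdLift_comp_inrFP]; rfl)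
  refine eq_top_iff.2 fun x _ => ?_
  rw [← AlgHom.id_apply (R := k) x, ← hφ]
  exact (φ x).2

end FreeProd

section WordGrading

variable {F L ι : Type*} (R : Type*) [CommSemiring R] [Semiring F] [Algebra R F] [AddMonoid ι]
  (deg : L → ι) (emb : L → F)

/-- The span of the products of words of total degree `n`, for an alphabet `L` of letters `l` of
degree `deg l` with values `emb l` in an algebra `F`. Both `fpGrade` and `taGrade` are of this
form. -/
def wordGrade (n : ι) : Submodule R F :=
  Submodule.span R {x | ∃ l : List L, (l.map deg).sum = n ∧ x = (l.map emb).prod}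

instance wordGrade.gradedMonoid : SetLike.GradedMonoid (wordGrade R deg emb) where
  one_mem := Submodule.subset_span ⟨[], rfl, rfl⟩
  mul_mem m n x y hx hy := by
    have hxy := Submodule.mul_mem_mul hx hy
    rw [wordGrade, wordGrade, Submodule.span_mul_span] at hxy
    refine Submodule.span_mono ?_ hxy
    rintro _ ⟨_, ⟨l, rfl, rfl⟩, _, ⟨l', rfl, rfl⟩, rfl⟩
    exact ⟨l ++ l', by simp, by simp⟩

theorem emb_mem_wordGrade (l : L) : emb l ∈ wordGrade R deg emb (deg l) :=
  Submodule.subset_span ⟨[l], by simp, by simp⟩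

variable {R deg emb}

theorem wordGrade_le_comap {F' : Type*} [Semiring F'] [Algebra R F'] (φ : F →ₐ[R] F')
    {ℱ : ι → Submodule R F'} [SetLike.GradedMonoid ℱ] (h : ∀ l, φ (emb l) ∈ ℱ (deg l)) (n : ι) :
    wordGrade R deg emb n ≤ (ℱ n).comap φ.toLinearMap := by
  refine Submodule.span_le.2 ?_
  rintro _ ⟨l, rfl, rfl⟩
  simpa [map_list_prod] using SetLike.list_prod_map_mem_graded l deg (φ ∘ emb) fun l _ => h l

theorem iSup_wordGrade_eq_top (h : Algebra.adjoin R (Set.range emb) = ⊤) :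
    ⨆ n, wordGrade R deg emb n = ⊤ := by
  rw [eq_top_iff, ← Algebra.top_toSubmodule, ← h, Algebra.adjoin_eq_span, Submodule.span_le]
  intro x hx
  rw [SetLike.mem_coe, ← FreeMonoid.mrange_lift] at hx
  obtain ⟨l, rfl⟩ := hx
  exact Submodule.mem_iSup_of_mem _
    (Submodule.subset_span ⟨l.toList, rfl, FreeMonoid.lift_apply ..⟩)

end WordGrading

section Homogenization

open Polynomial

variable {R A F : Type*} [CommSemiring R] [Semiring A] [Semiring F] [Algebra R A] [Algebra R F]

/-- The algebra map `A → A[X]` sending `a` of degree `i` to `a X ^ i`. -/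
def homogenization (𝒜 : ℕ → Submodule R A) [GradedAlgebra 𝒜] : A →ₐ[R] A[X] :=
  (DirectSum.toAlgebra R (fun i => 𝒜 i)
    (fun i => (monomial i).restrictScalars R ∘ₗ (𝒜 i).subtype) (by simp)
    fun _ _ => (monomial_mul_monomial ..).symm).comp (decomposeAlgEquiv 𝒜).toAlgHom

theorem homogenization_of_mem {𝒜 : ℕ → Submodule R A} [GradedAlgebra 𝒜] {i : ℕ} {a : A}
    (ha : a ∈ 𝒜 i) : homogenization 𝒜 a = monomial i a := by
  lift a to 𝒜 i using ha
  rw [homogenization, AlgHom.comp_apply, AlgEquiv.coe_toAlgHom, decomposeAlgEquiv_apply,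
    decompose_coe]
  exact DirectSum.toAddMonoid_of
    (fun i => ((monomial i).restrictScalars R ∘ₗ (𝒜 i).subtype).toAddMonoidHom) i a

theorem wordGrade_le_eqLocus_monomial {L : Type*} {deg : L → ℕ} {emb : L → F} (δ : F →ₐ[R] F[X])
    (h : ∀ l, δ (emb l) = monomial (deg l) (emb l)) (n : ℕ) :
    wordGrade R deg emb n ≤ δ.toLinearMap.eqLocus ((monomial n).restrictScalars R) := by
  refine Submodule.span_le.2 ?_
  rintro _ ⟨l, rfl, rfl⟩
  change δ _ = monomial _ _
  induction l with
  | nil => simp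
  | cons a l ih => simp [h, ih, monomial_mul_monomial]

theorem iSupIndep_of_le_eqLocus_monomial {M : ℕ → Submodule R F} (δ : F →ₗ[R] F[X])
    (h : ∀ n, M n ≤ δ.eqLocus ((monomial n).restrictScalars R)) : iSupIndep M := by
  intro n
  rw [Submodule.disjoint_def]
  intro x hx hx'
  let coeffMap : F →ₗ[R] F := (lcoeff F n).restrictScalars R ∘ₗ δ
  have coeffMap_of_mem {j : ℕ} {y : F} (hy : y ∈ M j) : coeffMap y = if j = n then y else 0 := by
    have hδ : δ y = monomial j y := h j hy
    simp [coeffMap, hδ, coeff_monomial]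
  have hle : ⨆ (j) (_ : j ≠ n), M j ≤ LinearMap.ker coeffMap :=
    iSup₂_le fun j hj y hy => by simp [coeffMap_of_mem hy, hj]
  simpa [coeffMap_of_mem hx] using hle hx'

end Homogenization

section TensorGrading

variable {R U V : Type*} [CommSemiring R] [AddCommMonoid U] [AddCommMonoid V] [Module R U]
  [Module R V]

theorem iSup_map₂_mk_eq_top {ι κ : Type*} {𝒰 : ι → Submodule R U} {𝒱 : κ → Submodule R V}
    (hU : ⨆ i, 𝒰 i = ⊤) (hV : ⨆ j, 𝒱 j = ⊤) :
    ⨆ i, ⨆ j, Submodule.map₂ (TensorProduct.mk R U V) (𝒰 i) (𝒱 j) = ⊤ := by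
  simp only [← Submodule.map₂_iSup_right, ← Submodule.map₂_iSup_left, hU, hV,
    TensorProduct.map₂_mk_top_top_eq_top]

theorem adjoin_range_tensorAlgebra_ι_eq_top {ι : Type*} {𝒰 : ι → Submodule R U}
    (hU : ⨆ i, 𝒰 i = ⊤) :
    Algebra.adjoin R (Set.range fun p : Σ i, 𝒰 i => TensorAlgebra.ι R (p.2 : U)) = ⊤ := by
  set S := Algebra.adjoin R (Set.range fun p : Σ i, 𝒰 i => TensorAlgebra.ι R (p.2 : U))
  have hι : ⊤ ≤ S.toSubmodule.comap (TensorAlgebra.ι R) :=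
    hU ▸ iSup_le fun i u hu => Algebra.subset_adjoin ⟨⟨i, u, hu⟩, rfl⟩
  refine eq_top_iff.2 fun t _ => ?_
  induction t using TensorAlgebra.induction with
  | algebraMap r => exact S.algebraMap_mem r
  | ι u => exact hι Submodule.mem_top
  | mul s t hs ht => exact S.mul_mem (hs trivial) (ht trivial)
  | add s t hs ht => exact S.add_mem (hs trivial) (ht trivial)

end TensorGrading

section Gradings

variable {k} {A B : Type} [Ring A] [Ring B] [Algebra k A] [Algebra k B]
  {𝒜 : ℕ → Submodule k A} {ℬ : ℕ → Submodule k B}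

theorem isCompl_augSub [GradedRing 𝒜] (h : 𝒜 0 = Submodule.span k {1}) :
    IsCompl (Submodule.span k {(1 : A)}) (augSub k A 𝒜) := by
  have hint := DirectSum.Decomposition.isInternal 𝒜
  have haug : augSub k A 𝒜 = ⨆ (i) (_ : i ≠ 0), 𝒜 i := by
    simp only [augSub, iSup_subtype, Nat.pos_iff_ne_zero]
  rw [← h, haug]
  exact ⟨hint.submodule_iSupIndep 0, codisjoint_iff.2 <| by
    rw [← iSup_split_single, hint.submodule_iSup_eq_top]⟩

theorem iSup_comap_augSub_eq_top :
    ⨆ i, (𝒜 i).comap (augSub k A 𝒜).subtype = ⊤ := by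
  refine Submodule.map_injective_of_injective (augSub k A 𝒜).injective_subtype (le_antisymm
    (Submodule.map_mono le_top) ?_)
  rw [Submodule.map_subtype_top, Submodule.map_iSup]
  refine iSup_le fun i => le_iSup_of_le i.1 ?_
  rw [Submodule.map_comap_subtype]
  exact le_inf (le_iSup (fun i : {i : ℕ // 0 < i} => 𝒜 i) i) le_rfl

variable (𝒜 ℬ)

instance fpGrade.gradedMonoid : SetLike.GradedMonoid (fpGrade k A B 𝒜 ℬ) :=
  wordGrade.gradedMonoid k (letterDeg k A B 𝒜 ℬ) (letterEmb k A B 𝒜 ℬ)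

theorem iSupIndep_fpGrade [GradedRing 𝒜] [GradedRing ℬ] : iSupIndep (fpGrade k A B 𝒜 ℬ) := by
  let δ : FreeProd k A B →ₐ[k] Polynomial (FreeProd k A B) :=
    freeProdLift ((Polynomial.mapAlgHom (inlFP k A B)).comp (homogenization 𝒜))
      ((Polynomial.mapAlgHom (inrFP k A B)).comp (homogenization ℬ))
  have hδ (l : Letter k A B 𝒜 ℬ) : δ (letterEmb k A B 𝒜 ℬ l) =
      Polynomial.monomial (letterDeg k A B 𝒜 ℬ l) (letterEmb k A B 𝒜 ℬ l) := by
    rcases l with ⟨i, a⟩ | ⟨j, b⟩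
    · refine (AlgHom.congr_fun (freeProdLift_comp_inlFP _ _) (a : A)).trans ?_
      simp [homogenization_of_mem a.2, letterDeg, letterEmb]
    · refine (AlgHom.congr_fun (freeProdLift_comp_inrFP _ _) (b : B)).trans ?_
      simp [homogenization_of_mem b.2, letterDeg, letterEmb]
  exact iSupIndep_of_le_eqLocus_monomial δ.toLinearMap (wordGrade_le_eqLocus_monomial δ hδ)

variable {𝒜 ℬ}

theorem inlFP_mem_fpGrade {i : ℕ} {a : A} (ha : a ∈ 𝒜 i) :
    inlFP k A B a ∈ fpGrade k A B 𝒜 ℬ i :=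
  emb_mem_wordGrade k (letterDeg k A B 𝒜 ℬ) (letterEmb k A B 𝒜 ℬ) (.inl ⟨i, a, ha⟩)

theorem inrFP_mem_fpGrade {j : ℕ} {b : B} (hb : b ∈ ℬ j) :
    inrFP k A B b ∈ fpGrade k A B 𝒜 ℬ j :=
  emb_mem_wordGrade k (letterDeg k A B 𝒜 ℬ) (letterEmb k A B 𝒜 ℬ) (.inr ⟨j, b, hb⟩)

theorem iSup_pairGrade_eq_top : ⨆ d, pairGrade k A B 𝒜 ℬ d = ⊤ := by
  rw [eq_top_iff, ← iSup_map₂_mk_eq_top iSup_comap_augSub_eq_top iSup_comap_augSub_eq_top]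
  exact iSup₂_le fun i j => Submodule.map₂_le.2 fun a ha b hb =>
    Submodule.mem_iSup_of_mem (i + j) (Submodule.subset_span ⟨i, j, a, b, ha, hb, rfl, rfl⟩)

theorem taGrade_eq_wordGrade (m : ℕ) : taGrade k A B 𝒜 ℬ m =
    wordGrade k (fun p : Σ d, pairGrade k A B 𝒜 ℬ d => p.1)
      (fun p => TensorAlgebra.ι k (p.2 : augSub k A 𝒜 ⊗[k] augSub k B ℬ)) m :=
  rfl

theorem iSup_taGrade_eq_top : ⨆ m, taGrade k A B 𝒜 ℬ m = ⊤ := by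
  simp only [taGrade_eq_wordGrade]
  exact iSup_wordGrade_eq_top (adjoin_range_tensorAlgebra_ι_eq_top iSup_pairGrade_eq_top)

theorem tmul_mem_rhsGrade {i j m : ℕ} {b : B} {a : A}
    {t : TensorAlgebra k (augSub k A 𝒜 ⊗[k] augSub k B ℬ)} (hb : b ∈ ℬ j)
    (ht : t ∈ taGrade k A B 𝒜 ℬ m) (ha : a ∈ 𝒜 i) :
    b ⊗ₜ (t ⊗ₜ a) ∈ rhsGrade k A B 𝒜 ℬ (j + m + i) :=
  Submodule.subset_span ⟨i, j, m, b, t, a, hb, ht, ha, rfl, rfl⟩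

theorem iSup_rhsGrade_eq_top (hA : ⨆ i, 𝒜 i = ⊤) (hB : ⨆ j, ℬ j = ⊤) :
    ⨆ n, rhsGrade k A B 𝒜 ℬ n = ⊤ := by
  have hTA := iSup_map₂_mk_eq_top (iSup_taGrade_eq_top (𝒜 := 𝒜) (ℬ := ℬ)) hA
  rw [eq_top_iff, ← TensorProduct.map₂_mk_top_top_eq_top, ← hB, Submodule.map₂_iSup_left]
  refine iSup_le fun j => Submodule.map₂_le.2 fun b hb x _ => ?_
  suffices ⊤ ≤ (⨆ n, rhsGrade k A B 𝒜 ℬ n).comap (TensorProduct.mk k B _ b) from this trivial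
  rw [← hTA]
  exact iSup₂_le fun m i => Submodule.map₂_le.2 fun t ht a ha =>
    Submodule.mem_iSup_of_mem _ (tmul_mem_rhsGrade hb ht ha)

theorem pairLift_ι_mem_fpGrade {d : ℕ} {x : augSub k A 𝒜 ⊗[k] augSub k B ℬ}
    (hx : x ∈ pairGrade k A B 𝒜 ℬ d) :
    pairLift _ _ (inlFP k A B) (inrFP k A B) (TensorAlgebra.ι k x) ∈ fpGrade k A B 𝒜 ℬ d := by
  suffices pairGrade k A B 𝒜 ℬ d ≤ (fpGrade k A B 𝒜 ℬ d).comap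
    ((pairLift _ _ (inlFP k A B) (inrFP k A B)).toLinearMap ∘ₗ TensorAlgebra.ι k) from this hx
  refine Submodule.span_le.2 ?_
  rintro _ ⟨i, j, a, b, ha, hb, rfl, rfl⟩
  rw [SetLike.mem_coe, Submodule.mem_comap, LinearMap.comp_apply, AlgHom.toLinearMap_apply,
    pairLift_ι_tmul]
  exact SetLike.mul_mem_graded (inlFP_mem_fpGrade ha) (inrFP_mem_fpGrade hb)

theorem taGrade_le_comap_fpGrade (m : ℕ) : taGrade k A B 𝒜 ℬ m ≤ (fpGrade k A B 𝒜 ℬ m).comap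
    (pairLift _ _ (inlFP k A B) (inrFP k A B)).toLinearMap := by
  rw [taGrade_eq_wordGrade]
  exact wordGrade_le_comap (pairLift _ _ (inlFP k A B) (inrFP k A B))
    (ℱ := fpGrade k A B 𝒜 ℬ) (fun p => pairLift_ι_mem_fpGrade p.2.2) m

theorem rhsGrade_le_comap_fpGrade (n : ℕ) : rhsGrade k A B 𝒜 ℬ n ≤ (fpGrade k A B 𝒜 ℬ n).comap
    (evalNormalForm _ _ (inlFP k A B) (inrFP k A B)) := by
  refine Submodule.span_le.2 ?_
  rintro _ ⟨i, j, m, b, t, a, hb, ht, ha, rfl, rfl⟩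
  rw [SetLike.mem_coe, Submodule.mem_comap, evalNormalForm_tmul, add_assoc]
  exact SetLike.mul_mem_graded (inrFP_mem_fpGrade hb)
    (SetLike.mul_mem_graded (taGrade_le_comap_fpGrade m ht) (inlFP_mem_fpGrade ha))

theorem evalNormalForm_bijective {P : Submodule k A} {Q : Submodule k B}
    (hP : IsCompl (Submodule.span k {1}) P) (hQ : IsCompl (Submodule.span k {1}) Q) :
    Function.Bijective (evalNormalForm P Q (inlFP k A B) (inrFP k A B)) := by
  rcases subsingleton_or_nontrivial A with hA | hA
  · have := (inlFP k A B).toRingHom.codomain_trivial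
    have : Subsingleton (NormalForm P Q) := inferInstance
    exact ⟨Function.injective_of_subsingleton _, Function.surjective_to_subsingleton _⟩
  rcases subsingleton_or_nontrivial B with hB | hB
  · have := (inrFP k A B).toRingHom.codomain_trivial
    have : Subsingleton (NormalForm P Q) := inferInstance
    exact ⟨Function.injective_of_subsingleton _, Function.surjective_to_subsingleton _⟩
  have hP' := IsUnitComplement.of_isCompl hP
  have hQ' := IsUnitComplement.of_isCompl hQ
  exact ⟨evalNormalForm_injective (freeProdLift_comp_inlFP (inlAction hP' hQ') (inrAction P Q))
    (freeProdLift_comp_inrFP _ _),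
    evalNormalForm_surjective hP' hQ' (range_inlFP_sup_range_inrFP k A B)⟩

end Gradings

/-- **(Proof of Lemma 1.7 in Moore, "Cohomology over fiber products of local rings")**.
For connected graded `k`-algebras `A` and `B` there is an isomorphism of graded
`k`-vector spaces `A ⊔ B ≅ B ⊗_k T_k(A₊ ⊗_k B₊) ⊗_k A`, where `A ⊔ B` is the free
product (coproduct of connected graded `k`-algebras), `T_k` denotes the tensor algebra,
and everything is graded by total degree. -/
theorem freeProduct_tensor_decomposition
    (A B : Type) [Ring A] [Ring B] [Algebra k A] [Algebra k B]
    (𝒜 : ℕ → Submodule k A) (ℬ : ℕ → Submodule k B)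
    [GradedRing 𝒜] [GradedRing ℬ]
    (hconnA : 𝒜 0 = Submodule.span k {1}) (hconnB : ℬ 0 = Submodule.span k {1}) :
    ∃ e : FreeProd k A B ≃ₗ[k]
        (B ⊗[k] ((TensorAlgebra k (↥(augSub k A 𝒜) ⊗[k] ↥(augSub k B ℬ))) ⊗[k] A)),
      ∀ n : ℕ, Submodule.map (e : FreeProd k A B →ₗ[k] _) (fpGrade k A B 𝒜 ℬ n) =
        rhsGrade k A B 𝒜 ℬ n := by
  let E := LinearEquiv.ofBijective _
    (evalNormalForm_bijective (isCompl_augSub hconnA) (isCompl_augSub hconnB))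
  have hle : (fun n => (rhsGrade k A B 𝒜 ℬ n).map E.toLinearMap) ≤ fpGrade k A B 𝒜 ℬ := fun n =>
    Submodule.map_le_iff_le_comap.2 (rhsGrade_le_comap_fpGrade n)
  have hspan : ⨆ n, (rhsGrade k A B 𝒜 ℬ n).map E.toLinearMap = ⊤ := by
    rw [← Submodule.map_iSup, iSup_rhsGrade_eq_top
      (DirectSum.Decomposition.isInternal 𝒜).submodule_iSup_eq_top
      (DirectSum.Decomposition.isInternal ℬ).submodule_iSup_eq_top, Submodule.map_top,
      LinearEquiv.range]
  have heq := ((iSupIndep_fpGrade 𝒜 ℬ).le_iff_eq_of_iSup_eq_top hspan).1 hle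
  exact ⟨E.symm, fun n => (Submodule.map_symm_eq_iff E).2 (congrFun heq n)⟩
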